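/- Let δ, μ, ε, τ ∈ ℂ with Re(δ) > 0 and Re(τ) < 1 + min{Re(μ), Re(ε)}. Then for x > 0, the right-sided Saigo fractional integral of the power function satisfies (I₋^{δ,μ,ε} t^{τ−1})(x) = [Γ(μ−τ+1) Γ(ε−τ+1)] / [Γ(1−τ) Γ(δ+μ+ε−τ+1)] · x^{τ−μ−1}. -/

import Mathlib

open MeasureTheory

/-- Pochhammer symbol `(a)_n = a (a+1) ⋯ (a+n−1)`. -/
noncomputable def poch (a : ℂ) (n : ℕ) : ℂ := ∏ i ∈ Finset.range n, (a + i)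

/-- Generalized hypergeometric function `ₚF_q(a₁,…,a_p; c₁,…,c_q; x)`. -/
noncomputable def genHyp (as cs : List ℂ) (x : ℂ) : ℂ :=
  ∑' k : ℕ, ((as.map (fun a => poch a k)).prod / (cs.map (fun c => poch c k)).prod)
    * x ^ k / (Nat.factorial k)

/-- Appell's double hypergeometric function `F₃(a,a′,b,b′;c;x,y)`. -/
noncomputable def appellF3 (a a' b b' c x y : ℂ) : ℂ :=
  ∑' mn : ℕ × ℕ, poch a mn.1 * poch a' mn.2 * poch b mn.1 * poch b' mn.2 /
    (poch c (mn.1 + mn.2) * (Nat.factorial mn.1) * (Nat.factorial mn.2)) * x ^ mn.1 * y ^ mn.2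

/-- Generalized binomial coefficient `binom(a,k) = a(a−1)⋯(a−k+1)/k!`. -/
noncomputable def gbinom (a : ℂ) (k : ℕ) : ℂ := (∏ i ∈ Finset.range k, (a - i)) / (Nat.factorial k)

/-- Jacobi type orthogonal polynomial `M_n^{(p,q)}(x)`. -/
noncomputable def jacobiM (n : ℕ) (p q x : ℂ) : ℂ :=
  (-1) ^ n * (Nat.factorial n) * ∑ k ∈ Finset.range (n + 1),
    gbinom (p - n - 1) k * gbinom (q + n) (n - k) * (-x) ^ k

/-- Left-sided Marichev–Saigo–Maeda fractional integral operator. -/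
noncomputable def msmLeft (δ δ' μ μ' ε : ℂ) (f : ℝ → ℂ) (x : ℝ) : ℂ :=
  (x : ℂ) ^ (-δ) / Complex.Gamma ε *
    ∫ t in Set.Ioo (0 : ℝ) x, ((x - t : ℝ) : ℂ) ^ (ε - 1) * (t : ℂ) ^ (-δ') *
      appellF3 δ δ' μ μ' ε ((1 - t / x : ℝ) : ℂ) ((1 - x / t : ℝ) : ℂ) * f t

/-- Right-sided Marichev–Saigo–Maeda fractional integral operator. -/
noncomputable def msmRight (δ δ' μ μ' ε : ℂ) (f : ℝ → ℂ) (x : ℝ) : ℂ :=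
  (x : ℂ) ^ (-δ') / Complex.Gamma ε *
    ∫ t in Set.Ioi x, ((t - x : ℝ) : ℂ) ^ (ε - 1) * (t : ℂ) ^ (-δ) *
      appellF3 δ δ' μ μ' ε ((1 - t / x : ℝ) : ℂ) ((1 - x / t : ℝ) : ℂ) * f t

/-- Left-sided Saigo fractional integral operator. -/
noncomputable def saigoLeft (δ μ ε : ℂ) (f : ℝ → ℂ) (x : ℝ) : ℂ :=
  (x : ℂ) ^ (-δ - μ) / Complex.Gamma δ *
    ∫ t in Set.Ioo (0 : ℝ) x, ((x - t : ℝ) : ℂ) ^ (δ - 1) *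
      genHyp [δ + μ, -ε] [δ] ((1 - t / x : ℝ) : ℂ) * f t

/-- Right-sided Saigo fractional integral operator. -/
noncomputable def saigoRight (δ μ ε : ℂ) (f : ℝ → ℂ) (x : ℝ) : ℂ :=
  (1 / Complex.Gamma δ) *
    ∫ t in Set.Ioi x, ((t - x : ℝ) : ℂ) ^ (δ - 1) * (t : ℂ) ^ (-δ - μ) *
      genHyp [δ + μ, -ε] [δ] ((1 - x / t : ℝ) : ℂ) * f t

/-- Left-sided Riemann–Liouville fractional integral operator. -/
noncomputable def rlLeft (δ : ℂ) (f : ℝ → ℂ) (x : ℝ) : ℂ :=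
  (1 / Complex.Gamma δ) * ∫ t in Set.Ioo (0 : ℝ) x, ((x - t : ℝ) : ℂ) ^ (δ - 1) * f t

/-- Right-sided Riemann–Liouville fractional integral operator. -/
noncomputable def rlRight (δ : ℂ) (f : ℝ → ℂ) (x : ℝ) : ℂ :=
  (1 / Complex.Gamma δ) * ∫ t in Set.Ioi x, ((t - x : ℝ) : ℂ) ^ (δ - 1) * f t

/-- Left-sided Erdélyi–Kober fractional integral operator `I⁺_{ε,δ}`. -/
noncomputable def ekLeft (ε δ : ℂ) (f : ℝ → ℂ) (x : ℝ) : ℂ :=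
  (x : ℂ) ^ (-δ - ε) / Complex.Gamma δ *
    ∫ t in Set.Ioo (0 : ℝ) x, ((x - t : ℝ) : ℂ) ^ (δ - 1) * (t : ℂ) ^ ε * f t

/-- Right-sided Erdélyi–Kober fractional integral operator `K⁻_{ε,δ}`. -/
noncomputable def ekRight (ε δ : ℂ) (f : ℝ → ℂ) (x : ℝ) : ℂ :=
  (x : ℂ) ^ ε / Complex.Gamma δ *
    ∫ t in Set.Ioi x, ((t - x : ℝ) : ℂ) ^ (δ - 1) * (t : ℂ) ^ (-δ - ε) * f t

/-- Left-sided Marichev–Saigo–Maeda fractional derivative operator. -/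
noncomputable def msmDLeft (δ δ' μ μ' ε : ℂ) (f : ℝ → ℂ) (x : ℝ) : ℂ :=
  iteratedDeriv (⌊ε.re⌋ + 1).toNat
    (msmLeft (-δ') (-δ) (-μ' + ((⌊ε.re⌋ + 1 : ℤ) : ℂ)) (-μ) (-ε + ((⌊ε.re⌋ + 1 : ℤ) : ℂ)) f) x

/-- Right-sided Marichev–Saigo–Maeda fractional derivative operator. -/
noncomputable def msmDRight (δ δ' μ μ' ε : ℂ) (f : ℝ → ℂ) (x : ℝ) : ℂ :=
  (-1 : ℂ) ^ (⌊ε.re⌋ + 1).toNat * iteratedDeriv (⌊ε.re⌋ + 1).toNat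
    (msmRight (-δ') (-δ) (-μ') (-μ + ((⌊ε.re⌋ + 1 : ℤ) : ℂ)) (-ε + ((⌊ε.re⌋ + 1 : ℤ) : ℂ)) f) x

/-!
Substituting `t = x / (1 - v)` turns the Saigo integral of a power into an Euler integral over
`(0, 1)`, with weight `v ^ (δ - 1) * (1 - v) ^ (μ - τ)`. Integrating the hypergeometric series term
by term replaces its lower parameter `δ` by `δ + μ - τ + 1` and its argument by `1`, and the
resulting series is evaluated by Gauss's theorem.

Gauss's theorem `₂F₁(a, b; c; 1) = Γ(c) Γ(c - a - b) / (Γ(c - a) Γ(c - b))` is proved by pushing `c`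
to infinity: the contiguous relation `(c - a - b) c F(c) = (c - a) (c - b) F(c + 1)` is iterated,
`F(c + m) → 1`, and the accumulated Pochhammer quotients converge to the quotient of Gamma values
by Euler's limit formula.
-/

section Pochhammer

open Complex Filter Topology

lemma ne_neg_natCast_of_re_pos {z : ℂ} (hz : 0 < z.re) (n : ℕ) : z ≠ -n := by
  rintro rfl
  simp only [neg_re, natCast_re, Left.neg_pos_iff] at hz
  exact hz.not_ge n.cast_nonneg

lemma poch_eq_ascPochhammer_eval (a : ℂ) (n : ℕ) : poch a n = (ascPochhammer ℂ n).eval a := by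
  induction n with
  | zero => simp [poch]
  | succ n ih => rw [ascPochhammer_succ_eval, ← ih, poch, Finset.prod_range_succ, poch]

lemma poch_zero (a : ℂ) : poch a 0 = 1 := Finset.prod_range_zero _

lemma poch_one_left (n : ℕ) : poch 1 n = n.factorial := by
  rw [poch_eq_ascPochhammer_eval, ascPochhammer_eval_one]

lemma poch_succ (a : ℂ) (n : ℕ) : poch a (n + 1) = poch a n * (a + n) :=
  Finset.prod_range_succ _ _

lemma mul_poch_add_one (a : ℂ) (n : ℕ) : a * poch (a + 1) n = poch a n * (a + n) := by
  rw [← poch_succ, poch, poch, Finset.prod_range_succ', mul_comm]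
  simp only [Nat.cast_zero, Nat.cast_succ, add_zero, add_assoc, add_comm (1 : ℂ)]

lemma poch_ne_zero {a : ℂ} (ha : ∀ k : ℕ, a ≠ -k) (n : ℕ) : poch a n ≠ 0 :=
  Finset.prod_ne_zero_iff.2 fun i _ h => ha i (eq_neg_of_add_eq_zero_left h)

lemma Gamma_add_natCast {a : ℂ} (ha : ∀ k : ℕ, a ≠ -k) (n : ℕ) :
    Gamma (a + n) = poch a n * Gamma a := by
  rw [poch_eq_ascPochhammer_eval, ← Gamma_add_nat_div_Gamma_eq a ha,
    div_mul_cancel₀ _ (Gamma_ne_zero ha)]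

lemma GammaSeq_eq_div_poch (a : ℂ) (n : ℕ) :
    GammaSeq a n = (n : ℂ) ^ a * n.factorial / poch a (n + 1) := rfl

lemma tendsto_inv_GammaSeq (a : ℂ) :
    Tendsto (fun n => (GammaSeq a n)⁻¹) atTop (𝓝 (Gamma a)⁻¹) := by
  by_cases h : Gamma a = 0
  · obtain ⟨m, rfl⟩ := (Gamma_eq_zero_iff a).1 h
    have h_poch {n : ℕ} (hn : m ≤ n) : poch (-m) (n + 1) = 0 :=
      Finset.prod_eq_zero (Finset.mem_range.2 (Nat.lt_succ_of_le hn)) (neg_add_cancel _)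
    refine tendsto_const_nhds.congr' ?_
    filter_upwards [eventually_ge_atTop m] with n hn
    rw [h, GammaSeq_eq_div_poch, h_poch hn, div_zero]
  · exact (GammaSeq_tendsto_Gamma a).inv₀ h

lemma eventually_add_natCast_ne_zero (a : ℂ) : ∀ᶠ n : ℕ in atTop, a + n ≠ 0 :=
  ((tendsto_const_add_cobounded a).comp tendsto_natCast_atTop_cobounded).eventually
    (Bornology.eventually_ne_cobounded 0)

lemma tendsto_add_natCast_div_add_natCast (s t : ℂ) :
    Tendsto (fun n : ℕ => (t + n) / (s + n)) atTop (𝓝 1) := by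
  have h := ((tendsto_natCast_div_add_atTop t).inv₀ one_ne_zero).mul
    (tendsto_natCast_div_add_atTop s)
  rw [inv_one, one_mul] at h
  refine h.congr' ?_
  filter_upwards [eventually_ne_atTop 0] with n hn
  have hn' : (n : ℂ) ≠ 0 := Nat.cast_ne_zero.2 hn
  rw [inv_div, div_mul_div_cancel₀ hn', add_comm, add_comm (n : ℂ) s]

lemma tendsto_poch_div_poch_mul_cpow (s t : ℂ) :
    Tendsto (fun n : ℕ => poch s n / poch t n * (n : ℂ) ^ (t - s)) atTop
      (𝓝 (Gamma t / Gamma s)) := by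
  have h := ((GammaSeq_tendsto_Gamma t).mul (tendsto_inv_GammaSeq s)).mul
    (tendsto_add_natCast_div_add_natCast s t)
  rw [mul_one, ← div_eq_mul_inv] at h
  refine h.congr' ?_
  filter_upwards [eventually_ne_atTop 0, eventually_add_natCast_ne_zero s,
    eventually_add_natCast_ne_zero t] with n hn hs ht
  have hn' : (n : ℂ) ≠ 0 := Nat.cast_ne_zero.2 hn
  have h_fact : (n.factorial : ℂ) ≠ 0 := Nat.cast_ne_zero.2 n.factorial_ne_zero
  have h_pow : (n : ℂ) ^ s ≠ 0 := by simp [cpow_eq_zero_iff, hn']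
  rw [GammaSeq_eq_div_poch, GammaSeq_eq_div_poch, poch_succ, poch_succ, cpow_sub _ _ hn']
  field_simp

lemma tendsto_poch_mul_poch_div {s t u v : ℂ} (h : s + t = u + v) :
    Tendsto (fun n => poch u n * poch v n / (poch s n * poch t n)) atTop
      (𝓝 (Gamma s * Gamma t / (Gamma u * Gamma v))) := by
  have h_lim := (tendsto_poch_div_poch_mul_cpow u s).mul (tendsto_poch_div_poch_mul_cpow v t)
  rw [div_mul_div_comm] at h_lim
  refine h_lim.congr' ?_
  filter_upwards [eventually_ne_atTop 0] with n hn
  have h_pow : (n : ℂ) ^ (s - u) * (n : ℂ) ^ (t - v) = 1 := by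
    rw [← cpow_add _ _ (Nat.cast_ne_zero.2 hn), show s - u + (t - v) = 0 by linear_combination h,
      cpow_zero]
  rw [mul_mul_mul_comm, h_pow, mul_one, div_mul_div_comm]

lemma norm_le_norm_add_natCast {z : ℂ} (hz : 0 ≤ z.re) (n : ℕ) : ‖z‖ ≤ ‖z + n‖ := by
  have hn : (0 : ℝ) ≤ n := n.cast_nonneg
  rw [← sq_le_sq₀ (norm_nonneg _) (norm_nonneg _), Complex.sq_norm, Complex.sq_norm, normSq_apply,
    normSq_apply, add_re, add_im, natCast_re, natCast_im]
  nlinarith only [mul_nonneg hz hn, sq_nonneg (n : ℝ)]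

lemma norm_poch_le_norm_poch_add_natCast {c : ℂ} (hc : 0 ≤ c.re) (m n : ℕ) :
    ‖poch c n‖ ≤ ‖poch (c + m) n‖ := by
  rw [poch, poch, norm_prod, norm_prod]
  refine Finset.prod_le_prod (fun _ _ => norm_nonneg _) fun i _ => ?_
  rw [add_right_comm]
  exact norm_le_norm_add_natCast (by simpa using add_nonneg hc i.cast_nonneg) m

lemma tendsto_inv_poch_add_natCast (c : ℂ) (n : ℕ) :
    Tendsto (fun m : ℕ => (poch (c + m) n)⁻¹) atTop (𝓝 (0 ^ n)) := by
  have h_factor (i : ℕ) : Tendsto (fun m : ℕ => (c + m + i)⁻¹) atTop (𝓝 0) := by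
    simp only [add_right_comm c]
    exact tendsto_inv₀_cobounded.comp
      ((tendsto_const_add_cobounded (c + i)).comp tendsto_natCast_atTop_cobounded)
  simpa only [poch, Finset.prod_inv_distrib, Finset.prod_const, Finset.card_range]
    using tendsto_finsetProd (Finset.range n) fun i _ => h_factor i

end Pochhammer

section HypergeometricCoefficients

open Complex Filter Topology Asymptotics

/-- The coefficient of `x ^ n` in the hypergeometric series `genHyp as cs x`. -/
noncomputable def hypCoeff (as cs : List ℂ) (n : ℕ) : ℂ :=
  (as.map (poch · n)).prod / (cs.map (poch · n)).prod / n.factorial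

lemma genHyp_eq_tsum (as cs : List ℂ) (x : ℂ) : genHyp as cs x = ∑' n, hypCoeff as cs n * x ^ n :=
  tsum_congr fun _ => mul_div_right_comm _ _ _

lemma genHyp_one_right (as cs : List ℂ) : genHyp as cs 1 = ∑' n, hypCoeff as cs n := by
  simp only [genHyp_eq_tsum, one_pow, mul_one]

lemma hypCoeff_cons_cons (as cs : List ℂ) (u v : ℂ) (n : ℕ) :
    hypCoeff (u :: as) (v :: cs) n = poch u n / poch v n * hypCoeff as cs n := by
  simp only [hypCoeff, List.map_cons, List.prod_cons]
  ring

lemma genHyp_cons_cons_cons_cancel {u : ℂ} (hu : ∀ k : ℕ, u ≠ -k) (as cs : List ℂ) (v x : ℂ) :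
    genHyp (u :: as) (v :: u :: cs) x = genHyp as (v :: cs) x := by
  have h_coeff (n : ℕ) : hypCoeff (u :: as) (v :: u :: cs) n = hypCoeff as (v :: cs) n := by
    have := poch_ne_zero hu n
    simp only [hypCoeff, List.map_cons, List.prod_cons]
    field_simp
  simp only [genHyp_eq_tsum, h_coeff]

lemma hypCoeff_two_one (a b c : ℂ) (n : ℕ) :
    hypCoeff [a, b] [c] n = poch a n * poch b n / n.factorial * (poch c n)⁻¹ := by
  simp only [hypCoeff, List.map_cons, List.map_nil, List.prod_cons, List.prod_nil, mul_one]
  ring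

lemma tendsto_hypCoeff_two_one_mul_cpow (a b c : ℂ) :
    Tendsto (fun n : ℕ => hypCoeff [a, b] [c] n * (n : ℂ) ^ (c + 1 - a - b)) atTop
      (𝓝 (Gamma c / (Gamma a * Gamma b))) := by
  have h := (tendsto_poch_div_poch_mul_cpow a c).mul (tendsto_poch_div_poch_mul_cpow b 1)
  rw [div_mul_div_comm, Gamma_one, mul_one] at h
  refine h.congr' ?_
  filter_upwards [eventually_ne_atTop 0] with n hn
  rw [mul_mul_mul_comm, ← cpow_add _ _ (Nat.cast_ne_zero.2 hn), poch_one_left, hypCoeff_two_one,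
    show c - a + (1 - b) = c + 1 - a - b by ring]
  ring

lemma isBigO_rpow_of_tendsto_mul_cpow {f : ℕ → ℂ} {w L : ℂ}
    (h : Tendsto (fun n => f n * (n : ℂ) ^ w) atTop (𝓝 L)) :
    f =O[atTop] fun n => (n : ℝ) ^ (-w.re) := by
  have h_pow : (fun n : ℕ => (n : ℂ) ^ (-w)) =O[atTop] fun n => (n : ℝ) ^ (-w.re) := by
    refine .of_norm_eventuallyLE ?_
    filter_upwards [eventually_gt_atTop 0] with n hn
    rw [norm_natCast_cpow_of_pos hn, neg_re]
  refine ((h.isBigO_one ℝ).mul h_pow).congr' ?_ (.of_eq (funext fun n => one_mul _))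
  filter_upwards [eventually_ne_atTop 0] with n hn
  rw [mul_assoc, ← cpow_add _ _ (Nat.cast_ne_zero.2 hn), add_neg_cancel, cpow_zero, mul_one]

lemma isBigO_hypCoeff_two_one (a b c : ℂ) :
    hypCoeff [a, b] [c] =O[atTop] fun n => (n : ℝ) ^ ((a + b - c).re - 1) := by
  refine (isBigO_rpow_of_tendsto_mul_cpow (tendsto_hypCoeff_two_one_mul_cpow a b c)).congr_right
    fun n => ?_
  congr 1
  simp only [add_re, sub_re, one_re]
  ring

lemma summable_norm_hypCoeff_two_one {a b c : ℂ} (h : 0 < (c - a - b).re) :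
    Summable fun n => ‖hypCoeff [a, b] [c] n‖ := by
  refine summable_of_isBigO_nat (Real.summable_nat_rpow.2 ?_)
    (isBigO_hypCoeff_two_one a b c).norm_left
  simp only [add_re, sub_re] at h ⊢
  linarith

lemma tendsto_natCast_mul_hypCoeff_two_one {a b c : ℂ} (h : 0 < (c - a - b).re) :
    Tendsto (fun n : ℕ => (n : ℂ) * hypCoeff [a, b] [c] n) atTop (𝓝 0) := by
  have h_bound : (fun n : ℕ => (n : ℂ) * hypCoeff [a, b] [c] n) =O[atTop]
      fun n => (n : ℝ) ^ (-(c - a - b).re) := by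
    refine isBigO_rpow_of_tendsto_mul_cpow
      ((tendsto_hypCoeff_two_one_mul_cpow a b c).congr' ?_)
    filter_upwards [eventually_ne_atTop 0] with n hn
    rw [show c + 1 - a - b = c - a - b + 1 by ring, cpow_add _ _ (Nat.cast_ne_zero.2 hn), cpow_one]
    ring
  exact h_bound.trans_tendsto ((tendsto_rpow_neg_atTop h).comp tendsto_natCast_atTop_atTop)

end HypergeometricCoefficients

section GaussSummation

open Complex Filter Topology

variable {a b c : ℂ}

lemma hypCoeff_two_one_contiguous (a b : ℂ) (hc : ∀ k : ℕ, c ≠ -k) (n : ℕ) :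
    (c - a - b) * c * hypCoeff [a, b] [c] n - (c - a) * (c - b) * hypCoeff [a, b] [c + 1] n =
      -c * ((n + 1 : ℕ) * hypCoeff [a, b] [c] (n + 1) - n * hypCoeff [a, b] [c] n) := by
  have hc0 : c ≠ 0 := by simpa using hc 0
  have hcn : c + n ≠ 0 := fun h => hc n (eq_neg_of_add_eq_zero_left h)
  have h_poch : poch c n ≠ 0 := poch_ne_zero hc n
  have h_fact : (n.factorial : ℂ) ≠ 0 := Nat.cast_ne_zero.2 n.factorial_ne_zero
  have hn : (n : ℂ) + 1 ≠ 0 := n.cast_add_one_ne_zero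
  have h_shift : poch (c + 1) n = poch c n * (c + n) / c :=
    eq_div_of_mul_eq hc0 ((mul_comm _ _).trans (mul_poch_add_one c n))
  simp only [hypCoeff_two_one, h_shift, poch_succ, Nat.factorial_succ]
  push_cast
  field_simp
  ring

lemma genHyp_two_one_contiguous (hc : ∀ k : ℕ, c ≠ -k) (h : 0 < (c - a - b).re) :
    (c - a - b) * c * genHyp [a, b] [c] 1 = (c - a) * (c - b) * genHyp [a, b] [c + 1] 1 := by
  have h' : 0 < (c + 1 - a - b).re := by
    simp only [sub_re, add_re, one_re] at h ⊢
    linarith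
  have h_sum := ((summable_norm_hypCoeff_two_one h).of_norm.hasSum.mul_left ((c - a - b) * c)).sub
    ((summable_norm_hypCoeff_two_one h').of_norm.hasSum.mul_left ((c - a) * (c - b)))
  have h_telescope (N : ℕ) : ∑ n ∈ Finset.range N, ((c - a - b) * c * hypCoeff [a, b] [c] n -
      (c - a) * (c - b) * hypCoeff [a, b] [c + 1] n) = -c * (N * hypCoeff [a, b] [c] N) := by
    simp only [hypCoeff_two_one_contiguous a b hc, ← Finset.mul_sum]
    rw [Finset.sum_range_sub (fun n : ℕ => (n : ℂ) * hypCoeff [a, b] [c] n), Nat.cast_zero,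
      zero_mul, sub_zero]
  have h_lim := (tendsto_natCast_mul_hypCoeff_two_one h).const_mul (-c)
  rw [mul_zero] at h_lim
  rw [genHyp_one_right, genHyp_one_right]
  exact sub_eq_zero.1
    (tendsto_nhds_unique (h_sum.tendsto_sum_nat.congr h_telescope) h_lim)

lemma poch_mul_genHyp_two_one (hc : ∀ k : ℕ, c ≠ -k) (h : 0 < (c - a - b).re) (m : ℕ) :
    poch c m * poch (c - a - b) m * genHyp [a, b] [c] 1 =
      poch (c - a) m * poch (c - b) m * genHyp [a, b] [c + m] 1 := by
  induction m with
  | zero => simp [poch_zero]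
  | succ m ih =>
    have hcm (k : ℕ) : c + m ≠ -k := fun hk => hc (m + k) (by
      push_cast
      linear_combination hk)
    have hm : 0 < (c + m - a - b).re := by
      simp only [sub_re, add_re, natCast_re] at h ⊢
      linarith [m.cast_nonneg (α := ℝ)]
    have h_step := genHyp_two_one_contiguous hcm hm
    simp only [poch_succ, Nat.cast_succ, ← add_assoc]
    linear_combination (c + m) * (c - a - b + m) * ih + poch (c - a) m * poch (c - b) m * h_step

lemma tendsto_genHyp_two_one_add_natCast_of_re_pos (hc : 0 < c.re)
    (h : 0 < (c - a - b).re) :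
    Tendsto (fun m : ℕ => genHyp [a, b] [c + m] 1) atTop (𝓝 1) := by
  have h_term (n : ℕ) : Tendsto (fun m : ℕ => hypCoeff [a, b] [c + m] n) atTop
      (𝓝 (poch a n * poch b n / n.factorial * 0 ^ n)) := by
    simp only [hypCoeff_two_one]
    exact (tendsto_inv_poch_add_natCast c n).const_mul _
  have h_bound (m n : ℕ) : ‖hypCoeff [a, b] [c + m] n‖ ≤ ‖hypCoeff [a, b] [c] n‖ := by
    have h_pos : 0 < ‖poch c n‖ := norm_pos_iff.2 (poch_ne_zero (ne_neg_natCast_of_re_pos hc) n)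
    rw [hypCoeff_two_one, hypCoeff_two_one, norm_mul, norm_mul, norm_inv, norm_inv]
    gcongr
    exact norm_poch_le_norm_poch_add_natCast hc.le m n
  have h_sum : ∑' n : ℕ, poch a n * poch b n / n.factorial * 0 ^ n = 1 := by
    rw [tsum_eq_single 0 fun n hn => by rw [zero_pow hn, mul_zero]]
    simp [poch_zero]
  simp only [genHyp_one_right]
  exact h_sum ▸ tendsto_tsum_of_dominated_convergence (summable_norm_hypCoeff_two_one h) h_term
    (.of_forall h_bound)

lemma tendsto_genHyp_two_one_add_natCast (a b c : ℂ) :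
    Tendsto (fun m : ℕ => genHyp [a, b] [c + m] 1) atTop (𝓝 1) := by
  obtain ⟨N, hN⟩ := exists_nat_gt (max (-c.re) (a + b - c).re)
  obtain ⟨hN₁, hN₂⟩ := max_lt_iff.1 hN
  have h_shift := tendsto_genHyp_two_one_add_natCast_of_re_pos (a := a) (b := b) (c := c + N)
    (by simp only [add_re, natCast_re]; linarith)
    (by simp only [sub_re, add_re, natCast_re] at hN₂ ⊢; linarith)
  refine (tendsto_add_atTop_iff_nat N).1 (h_shift.congr fun m => ?_)
  rw [Nat.cast_add, add_right_comm, add_assoc]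

theorem genHyp_two_one_one (hc : ∀ k : ℕ, c ≠ -k) (h : 0 < (c - a - b).re) :
    genHyp [a, b] [c] 1 =
      Gamma c * Gamma (c - a - b) / (Gamma (c - a) * Gamma (c - b)) := by
  have h_lim := (tendsto_poch_mul_poch_div (show c + (c - a - b) = c - a + (c - b) by ring)).mul
    (tendsto_genHyp_two_one_add_natCast a b c)
  rw [mul_one] at h_lim
  refine tendsto_nhds_unique (tendsto_const_nhds.congr fun m => ?_) h_lim
  have h_poch : poch c m * poch (c - a - b) m ≠ 0 :=
    mul_ne_zero (poch_ne_zero hc m) (poch_ne_zero (ne_neg_natCast_of_re_pos h) m)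
  rw [div_mul_eq_mul_div, eq_div_iff h_poch, mul_comm, poch_mul_genHyp_two_one hc h]

end GaussSummation

section EulerIntegral

open Complex Filter Asymptotics Set

variable {u v : ℂ}

lemma setIntegral_Ioo_eq_betaIntegral (u v : ℂ) :
    ∫ y in Ioo (0 : ℝ) 1, (y : ℂ) ^ (u - 1) * (1 - (y : ℂ)) ^ (v - 1) = betaIntegral u v := by
  rw [betaIntegral, intervalIntegral.integral_of_le zero_le_one, integral_Ioc_eq_integral_Ioo]

lemma integrableOn_Ioo_betaIntegrand (hu : 0 < u.re) (hv : 0 < v.re) :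
    IntegrableOn (fun y : ℝ => (y : ℂ) ^ (u - 1) * (1 - (y : ℂ)) ^ (v - 1)) (Ioo 0 1) :=
  (intervalIntegrable_iff_integrableOn_Ioo_of_le zero_le_one).1 (betaIntegral_convergent hu hv)

lemma ofReal_integral_norm_betaIntegrand (u v : ℂ) :
    ((∫ y in Ioo (0 : ℝ) 1, ‖(y : ℂ) ^ (u - 1) * (1 - (y : ℂ)) ^ (v - 1)‖ : ℝ) : ℂ) =
      betaIntegral u.re v.re := by
  rw [← setIntegral_Ioo_eq_betaIntegral, ← integral_complex_ofReal]
  refine setIntegral_congr_fun measurableSet_Ioo fun y hy => ?_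
  have hy' : 0 < 1 - y := sub_pos.2 hy.2
  rw [← ofReal_one, ← ofReal_sub, norm_mul, norm_cpow_eq_rpow_re_of_pos hy.1,
    norm_cpow_eq_rpow_re_of_pos hy', ofReal_mul, ofReal_cpow hy.1.le, ofReal_cpow hy'.le]
  simp only [sub_re, ofReal_sub, ofReal_one, one_re]

lemma betaIntegral_add_natCast_left (hu : 0 < u.re) (hv : 0 < v.re) (n : ℕ) :
    betaIntegral (u + n) v = poch u n / poch (u + v) n * betaIntegral u v := by
  have hun : 0 < (u + n).re := by simpa using add_pos_of_pos_of_nonneg hu n.cast_nonneg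
  have huv : 0 < (u + v).re := add_pos hu hv
  rw [betaIntegral_eq_Gamma_mul_div _ _ hun hv, betaIntegral_eq_Gamma_mul_div _ _ hu hv,
    add_right_comm, Gamma_add_natCast (ne_neg_natCast_of_re_pos hu),
    Gamma_add_natCast (ne_neg_natCast_of_re_pos huv)]
  ring

lemma isBigO_betaIntegral_add_natCast_left (hu : 0 < u.re) (hv : 0 < v.re) :
    (fun n : ℕ => betaIntegral (u + n) v) =O[atTop] fun n => (n : ℝ) ^ (-v.re) := by
  have h := tendsto_poch_div_poch_mul_cpow u (u + v)
  rw [add_sub_cancel_left] at h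
  simp only [betaIntegral_add_natCast_left hu hv, mul_comm _ (betaIntegral u v)]
  exact (isBigO_rpow_of_tendsto_mul_cpow h).const_mul_left _

lemma isBigO_integral_norm_betaIntegrand (hu : 0 < u.re) (hv : 0 < v.re) :
    (fun n : ℕ => ∫ y in Ioo (0 : ℝ) 1, ‖(y : ℂ) ^ (u + n - 1) * (1 - (y : ℂ)) ^ (v - 1)‖)
      =O[atTop] fun n => (n : ℝ) ^ (-v.re) := by
  refine ((isBigO_betaIntegral_add_natCast_left (u := u.re) (v := v.re) hu hv).norm_left.congr_left
    fun n => ?_).of_norm_left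
  rw [← norm_real, ofReal_integral_norm_betaIntegrand, add_re, natCast_re, ofReal_add,
    ofReal_natCast]

theorem setIntegral_Ioo_mul_genHyp (as cs : List ℂ) (hu : 0 < u.re) (hv : 0 < v.re)
    (h_summable : Summable fun n : ℕ => ‖hypCoeff as cs n‖ * (n : ℝ) ^ (-v.re)) :
    ∫ y in Ioo (0 : ℝ) 1, (y : ℂ) ^ (u - 1) * (1 - (y : ℂ)) ^ (v - 1) * genHyp as cs y =
      betaIntegral u v * genHyp (u :: as) ((u + v) :: cs) 1 := by
  set F : ℕ → ℝ → ℂ := fun n y =>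
    hypCoeff as cs n * ((y : ℂ) ^ (u + n - 1) * (1 - (y : ℂ)) ^ (v - 1)) with hF
  have h_series (y : ℝ) (hy : y ∈ Ioo (0 : ℝ) 1) :
      (y : ℂ) ^ (u - 1) * (1 - (y : ℂ)) ^ (v - 1) * genHyp as cs y = ∑' n, F n y := by
    rw [genHyp_eq_tsum, ← tsum_mul_left]
    refine tsum_congr fun n => ?_
    simp only [hF]
    rw [add_sub_right_comm, cpow_add _ _ (ofReal_ne_zero.2 hy.1.ne'), cpow_natCast]
    ring
  have h_integrable (n : ℕ) : IntegrableOn (F n) (Ioo 0 1) :=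
    (integrableOn_Ioo_betaIntegrand
      (by simpa using add_pos_of_pos_of_nonneg hu n.cast_nonneg) hv).const_mul _
  have h_norm : Summable fun n => ∫ y in Ioo (0 : ℝ) 1, ‖F n y‖ := by
    simp only [hF, norm_mul (hypCoeff as cs _), integral_const_mul]
    exact summable_of_isBigO_nat h_summable
      ((isBigO_refl _ _).mul (isBigO_integral_norm_betaIntegrand hu hv))
  have h_term (n : ℕ) : ∫ y in Ioo (0 : ℝ) 1, F n y =
      betaIntegral u v * hypCoeff (u :: as) ((u + v) :: cs) n := by
    simp only [hF]
    rw [integral_const_mul, setIntegral_Ioo_eq_betaIntegral,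
      betaIntegral_add_natCast_left hu hv, hypCoeff_cons_cons]
    ring
  rw [setIntegral_congr_fun measurableSet_Ioo h_series,
    ← (hasSum_integral_of_summable_integral_norm h_integrable h_norm).tsum_eq, tsum_congr h_term,
    tsum_mul_left, genHyp_one_right]

theorem setIntegral_Ioo_mul_genHyp_two_one {a b c s : ℂ} (hc : 0 < c.re) (hs : 0 < s.re)
    (h : 0 < (c + s - a - b).re) :
    ∫ y in Ioo (0 : ℝ) 1, (y : ℂ) ^ (c - 1) * (1 - (y : ℂ)) ^ (s - 1) * genHyp [a, b] [c] y =
      Gamma c * Gamma s * Gamma (c + s - a - b) /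
        (Gamma (c + s - a) * Gamma (c + s - b)) := by
  have hcs : 0 < (c + s).re := add_pos hc hs
  have h_summable : Summable fun n : ℕ => ‖hypCoeff [a, b] [c] n‖ * (n : ℝ) ^ (-s.re) := by
    have h_bigO : (fun n : ℕ => ‖hypCoeff [a, b] [c] n‖ * (n : ℝ) ^ (-s.re)) =O[atTop]
        fun n => (n : ℝ) ^ ((a + b - c).re - 1 + -s.re) := by
      refine ((isBigO_hypCoeff_two_one a b c).norm_left.mul (isBigO_refl _ _)).congr' .rfl ?_
      filter_upwards [eventually_gt_atTop 0] with n hn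
      exact (Real.rpow_add (Nat.cast_pos.2 hn) _ _).symm
    refine summable_of_isBigO_nat (Real.summable_nat_rpow.2 ?_) h_bigO
    simp only [add_re, sub_re] at h ⊢
    linarith
  rw [setIntegral_Ioo_mul_genHyp _ _ hc hs h_summable,
    genHyp_cons_cons_cons_cancel (ne_neg_natCast_of_re_pos hc),
    genHyp_two_one_one (ne_neg_natCast_of_re_pos hcs) h, betaIntegral_eq_Gamma_mul_div _ _ hc hs]
  have := Gamma_ne_zero_of_re_pos hcs
  field_simp

end EulerIntegral

section Saigo

open Complex Set

lemma image_div_one_sub_Ioo {x : ℝ} (hx : 0 < x) :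
    (fun v : ℝ => x / (1 - v)) '' Ioo 0 1 = Ioi x := by
  ext t
  simp only [mem_image, mem_Ioo, mem_Ioi]
  constructor
  · rintro ⟨v, ⟨hv₀, hv₁⟩, rfl⟩
    exact (lt_div_iff₀ (sub_pos.2 hv₁)).2 (by nlinarith)
  · intro ht
    have ht₀ : 0 < t := hx.trans ht
    refine ⟨1 - x / t, ⟨sub_pos.2 ((div_lt_one ht₀).2 ht), sub_lt_self 1 (div_pos hx ht₀)⟩, ?_⟩
    rw [sub_sub_cancel, div_div_cancel₀ hx.ne']

lemma integral_Ioi_eq_integral_Ioo_comp_div {E : Type*} [NormedAddCommGroup E] [NormedSpace ℝ E]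
    {x : ℝ} (hx : 0 < x) (g : ℝ → E) :
    ∫ t in Ioi x, g t = ∫ v in Ioo (0 : ℝ) 1, (x / (1 - v) ^ 2) • g (x / (1 - v)) := by
  have h_deriv (v : ℝ) (hv : v ∈ Ioo (0 : ℝ) 1) :
      HasDerivWithinAt (fun v => x / (1 - v)) (x / (1 - v) ^ 2) (Ioo 0 1) v := by
    refine HasDerivAt.hasDerivWithinAt ?_
    convert! (hasDerivAt_const v x).div ((hasDerivAt_id' v).const_sub 1)
      (sub_pos.2 hv.2).ne' using 1
    ring
  have h_inj : InjOn (fun v : ℝ => x / (1 - v)) (Ioo 0 1) := fun v _ w _ hvw =>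
    sub_right_injective (inv_injective (mul_left_cancel₀ hx.ne' hvw))
  rw [← image_div_one_sub_Ioo hx,
    integral_image_eq_integral_abs_deriv_smul measurableSet_Ioo h_deriv h_inj]
  simp only [abs_of_nonneg (div_nonneg hx.le (sq_nonneg _))]

lemma saigo_weight_comp_div (δ μ : ℂ) {x v : ℝ} (hx : 0 < x) (hv : v ∈ Ioo (0 : ℝ) 1) :
    ((x / (1 - v) ^ 2 : ℝ) : ℂ) *
        (((x / (1 - v) - x : ℝ) : ℂ) ^ (δ - 1) * ((x / (1 - v) : ℝ) : ℂ) ^ (-δ - μ)) =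
      (x : ℂ) ^ (-μ) * ((v : ℂ) ^ (δ - 1) * (1 - (v : ℂ)) ^ (μ - 1)) := by
  have hw : 0 < 1 - v := sub_pos.2 hv.2
  have ht : 0 < x / (1 - v) := div_pos hx hw
  have hx' : (x : ℂ) ≠ 0 := ofReal_ne_zero.2 hx.ne'
  have hw' : ((1 - v : ℝ) : ℂ) ≠ 0 := ofReal_ne_zero.2 hw.ne'
  have h_sub : x / (1 - v) - x = x / (1 - v) * v := by
    field_simp
    ring
  have h_pow : ((x / (1 - v) : ℝ) : ℂ) ^ (δ - 1) * ((x / (1 - v) : ℝ) : ℂ) ^ (-δ - μ) =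
      (x : ℂ) ^ (-μ) / x * (((1 - v : ℝ) : ℂ) ^ (μ - 1) * ((1 - v : ℝ) : ℂ) ^ 2) := by
    rw [← cpow_add _ _ (ofReal_ne_zero.2 ht.ne'), ofReal_div, div_cpow_ofReal_nonneg hx.le hw.le,
      show δ - 1 + (-δ - μ) = -μ - 1 by ring, cpow_sub _ _ hx', cpow_one,
      show -μ - 1 = -(μ - 1 + 2) by ring, cpow_neg _ (μ - 1 + 2), div_inv_eq_mul,
      cpow_add _ _ hw', cpow_ofNat]
  rw [h_sub, ofReal_mul, mul_cpow_ofReal_nonneg ht.le hv.1.le, mul_right_comm, h_pow,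
    ← ofReal_one, ← ofReal_sub, ofReal_div, ofReal_pow]
  field_simp

lemma saigoRight_eq_integral_Ioo (δ μ ε : ℂ) (f : ℝ → ℂ) {x : ℝ} (hx : 0 < x) :
    saigoRight δ μ ε f x = (x : ℂ) ^ (-μ) / Gamma δ *
      ∫ v in Ioo (0 : ℝ) 1, (v : ℂ) ^ (δ - 1) * (1 - (v : ℂ)) ^ (μ - 1) *
        genHyp [δ + μ, -ε] [δ] v * f (x / (1 - v)) := by
  rw [saigoRight, integral_Ioi_eq_integral_Ioo_comp_div hx, one_div, div_eq_inv_mul, mul_assoc]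
  congr 1
  rw [← integral_const_mul]
  refine setIntegral_congr_fun measurableSet_Ioo fun v hv => ?_
  have h_arg : 1 - x / (x / (1 - v)) = v := by rw [div_div_cancel₀ hx.ne', sub_sub_cancel]
  simp only [h_arg, real_smul]
  linear_combination genHyp [δ + μ, -ε] [δ] v * f (x / (1 - v)) * saigo_weight_comp_div δ μ hx hv

lemma saigoRight_cpow_eq_integral_Ioo (δ μ ε τ : ℂ) {x : ℝ} (hx : 0 < x) :
    saigoRight δ μ ε (fun t => (t : ℂ) ^ (τ - 1)) x = (x : ℂ) ^ (τ - μ - 1) / Gamma δ *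
      ∫ v in Ioo (0 : ℝ) 1, (v : ℂ) ^ (δ - 1) * (1 - (v : ℂ)) ^ (μ - τ) *
        genHyp [δ + μ, -ε] [δ] v := by
  have h_integrand (v : ℝ) (hv : v ∈ Ioo (0 : ℝ) 1) :
      (v : ℂ) ^ (δ - 1) * (1 - (v : ℂ)) ^ (μ - 1) * genHyp [δ + μ, -ε] [δ] v *
          ((x / (1 - v) : ℝ) : ℂ) ^ (τ - 1) =
        (x : ℂ) ^ (τ - 1) * ((v : ℂ) ^ (δ - 1) * (1 - (v : ℂ)) ^ (μ - τ) *
          genHyp [δ + μ, -ε] [δ] v) := by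
    have hw : 0 < 1 - v := sub_pos.2 hv.2
    have hw' : 1 - (v : ℂ) ≠ 0 := by exact_mod_cast hw.ne'
    rw [ofReal_div, div_cpow_ofReal_nonneg hx.le hw.le, ofReal_sub, ofReal_one,
      ← sub_sub_sub_cancel_right μ τ 1, cpow_sub (μ - 1) (τ - 1) hw']
    ring
  rw [saigoRight_eq_integral_Ioo δ μ ε _ hx, setIntegral_congr_fun measurableSet_Ioo h_integrand,
    integral_const_mul, show τ - μ - 1 = -μ + (τ - 1) by ring,
    cpow_add _ _ (ofReal_ne_zero.2 hx.ne')]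
  ring

end Saigo

/-- Saigo right-sided fractional integral of a power function (Lemma 4). -/
theorem saigoRight_power (δ μ ε τ : ℂ) (hδ : 0 < δ.re)
    (hτ : τ.re < 1 + min μ.re ε.re) (x : ℝ) (hx : 0 < x) :
    saigoRight δ μ ε (fun t => (t : ℂ) ^ (τ - 1)) x =
      Complex.Gamma (μ - τ + 1) * Complex.Gamma (ε - τ + 1) /
        (Complex.Gamma (1 - τ) * Complex.Gamma (δ + μ + ε - τ + 1)) *
        (x : ℂ) ^ (τ - μ - 1) := by
  obtain ⟨hμ, hε⟩ := lt_min_iff.1 (sub_lt_iff_lt_add'.2 hτ)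
  have h_weight : 0 < (μ - τ + 1).re := by
    simp only [Complex.add_re, Complex.sub_re, Complex.one_re]
    linarith
  have h_gauss : 0 < (δ + (μ - τ + 1) - (δ + μ) - -ε).re := by
    simp only [Complex.add_re, Complex.sub_re, Complex.neg_re, Complex.one_re]
    linarith
  have h_euler := setIntegral_Ioo_mul_genHyp_two_one hδ h_weight h_gauss
  rw [add_sub_cancel_right (μ - τ), show δ + (μ - τ + 1) - (δ + μ) - -ε = ε - τ + 1 by ring,
    show δ + (μ - τ + 1) - (δ + μ) = 1 - τ by ring,
    show δ + (μ - τ + 1) - -ε = δ + μ + ε - τ + 1 by ring] at h_euler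
  rw [saigoRight_cpow_eq_integral_Ioo δ μ ε τ hx, h_euler]
  have := Complex.Gamma_ne_zero_of_re_pos hδ
  field_simp
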